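/- arXiv:1601.05480 — 2 statements merged into one kernel-verified Lean document; each statement's English description precedes it below -/
import Mathlib

section
/- Let c ∈ ℝ and let f_i(x) = a_i x + b_i (i ∈ [n]) be monotone nondecreasing linear functions, none of which is the identity (a_i ≥ 0 and (a_i, b_i) ≠ (1, 0)). Let σ be a permutation of [n] compatible with the lexicographic order with respect to (δ(f_i), γ(f_i)). Then there exists an integer t with 1 ≤ t ≤ n such that the cyclic rotation (σ(t), σ(t+1), …, σ(n), σ(1), σ(2), …, σ(t−1)) is optimal for the maximum total composition ordering problem ((f_i)_{i∈[n]}, c). -/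
/-!
The function `x ↦ a x + b` is encoded by the pair `(a, b)`, and attached to it is the plane
vector `(b, a - 1)`, which is nonzero because the function is not the identity. Two facts drive
the proof:

* applying `u` before `v` instead of after it changes the value by the cross product of the two
  vectors (`val_swap`), so the order only depends on the cyclic arrangement of directions;
* the vector of a composition is a nonnegative combination of the vectors of its factors, so
  membership in half-planes and convex cones passes to compositions (`halfplane_comp`,
  `cone_comp`).

The lexicographic order on `(δ, γ)` is the order of the arguments of these vectors in `(-π, π]`
(`th_le_of_lex`), so it suffices to show that some rotation of an argument-sorted list is
optimal (`exists_rotation`). This goes by induction on the length. In an optimal order, the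
functions after the first one, `f`, may be taken to form a rotation `G₁ ++ G₂` of a sorted list,
where `f` fits cyclically between `G₁` and `G₂`. Both `G₁ f G₂` and `f G₂ G₁` are then rotations
of the full sorted list. If both were strictly worse than `f G₁ G₂`, then moving the first member
of `G₁` to the very end would be a strict improvement (`exchange`), contradicting optimality.
-/

/-- `compSeq f σ k c = f (σ k) ∘ ⋯ ∘ f (σ 1) (c)` (0-indexed: applies `f (σ 0)` first). -/
def compSeq {n : ℕ} (f : Fin n → ℝ → ℝ) (σ : Fin n → Fin n) (k : ℕ) (c : ℝ) : ℝ :=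
  (((List.finRange n).take k).map σ).foldl (fun x i => f i x) c

/-- `γ` of the linear function `x ↦ a x + b`: the fixed point `b / (1 - a)` if `a ≠ 1`,
`+∞` if `a = 1` and `b < 0`, `-∞` if `a = 1` and `b ≥ 0`. -/
noncomputable def gam (a b : ℝ) : EReal :=
  if a = 1 then (if b < 0 then (⊤ : EReal) else (⊥ : EReal))
  else ((b / (1 - a) : ℝ) : EReal)

/-- `δ` of the linear function `x ↦ a x + b`: `+1` if `a ≥ 1`, `-1` if `a < 1`. -/
noncomputable def del (a : ℝ) : ℤ := if 1 ≤ a then 1 else -1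

/-! ### Compositions of linear functions given by coefficient pairs -/

/-- The value at `c` of the composition of the functions `x ↦ p.1 * x + p.2` for `p` in the list,
the head of the list being applied first. -/
def val (l : List (ℝ × ℝ)) (c : ℝ) : ℝ := l.foldl (fun x p => p.1 * x + p.2) c

/-- The slope of the composition of the functions in the list. -/
def slp (l : List (ℝ × ℝ)) : ℝ := (l.map Prod.fst).prod

/-- The cross product of the vectors `(b, a - 1)` attached to two pairs `(a, b)`. -/
def cr (u v : ℝ × ℝ) : ℝ := u.2 * (v.1 - 1) - (u.1 - 1) * v.2

/-- The coefficient pair of the composition of the functions in the list. -/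
def comp (l : List (ℝ × ℝ)) : ℝ × ℝ := (slp l, val l 0)

lemma val_cons (p : ℝ × ℝ) (l : List (ℝ × ℝ)) (c : ℝ) :
    val (p :: l) c = val l (p.1 * c + p.2) := rfl

lemma val_append (l m : List (ℝ × ℝ)) (c : ℝ) : val (l ++ m) c = val m (val l c) := by
  simp [val, List.foldl_append]

lemma slp_cons (p : ℝ × ℝ) (l : List (ℝ × ℝ)) : slp (p :: l) = p.1 * slp l := by
  simp [slp]

lemma slp_append (l m : List (ℝ × ℝ)) : slp (l ++ m) = slp l * slp m := by
  simp [slp]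

lemma val_eq (l : List (ℝ × ℝ)) (c : ℝ) : val l c = slp l * c + val l 0 := by
  induction l generalizing c with
  | nil => simp [val, slp]
  | cons p l ih =>
    rw [val_cons, val_cons, slp_cons, ih, ih (p.1 * 0 + p.2)]
    ring

lemma slp_nonneg {l : List (ℝ × ℝ)} (h : ∀ p ∈ l, 0 ≤ p.1) : 0 ≤ slp l := by
  apply List.prod_nonneg
  intro x hx
  obtain ⟨p, hp, rfl⟩ := List.mem_map.1 hx
  exact h p hp

lemma val_swap (l m : List (ℝ × ℝ)) (c : ℝ) :
    val (m ++ l) c = val (l ++ m) c + cr (comp m) (comp l) := by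
  rw [val_append, val_append, val_eq l (val m c), val_eq m c, val_eq m (val l c), val_eq l c]
  simp only [cr, comp]
  ring

lemma comp_cons (g : ℝ × ℝ) (l : List (ℝ × ℝ)) :
    (comp (g :: l)).2 = slp l * g.2 + (comp l).2 ∧
      (comp (g :: l)).1 - 1 = slp l * (g.1 - 1) + ((comp l).1 - 1) := by
  simp only [comp, slp_cons, val_cons]
  rw [val_eq l (g.1 * 0 + g.2)]
  constructor <;> ring

lemma halfplane_comp (f : ℝ × ℝ) (l : List (ℝ × ℝ)) (h0 : ∀ p ∈ l, 0 ≤ p.1)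
    (h : ∀ g ∈ l, 0 ≤ cr g f) : 0 ≤ cr (comp l) f := by
  induction l with
  | nil => simp [cr, comp, slp, val]
  | cons g l ih =>
    have ih := ih (fun p hp => h0 p (by simp [hp])) (fun p hp => h p (by simp [hp]))
    have hg := h g (by simp)
    have hA : 0 ≤ slp l := slp_nonneg (fun p hp => h0 p (by simp [hp]))
    obtain ⟨e1, e2⟩ := comp_cons g l
    have : cr (comp (g :: l)) f = slp l * cr g f + cr (comp l) f := by
      unfold cr
      rw [e1, e2]
      ring
    rw [this]
    positivity

/-- The vector of `g` is a nonnegative combination of the vectors of `f` and `h`. -/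
def InCone (f h g : ℝ × ℝ) : Prop :=
  ∃ s t : ℝ, 0 ≤ s ∧ 0 ≤ t ∧ g.2 = s * f.2 + t * h.2 ∧
    g.1 - 1 = s * (f.1 - 1) + t * (h.1 - 1)

lemma cone_comp (f h : ℝ × ℝ) (l : List (ℝ × ℝ)) (h0 : ∀ p ∈ l, 0 ≤ p.1)
    (hl : ∀ g ∈ l, InCone f h g) : InCone f h (comp l) := by
  induction l with
  | nil => exact ⟨0, 0, le_rfl, le_rfl, by simp [comp, val], by simp [comp, slp]⟩
  | cons g l ih =>
    obtain ⟨s, t, hs, ht, e1, e2⟩ :=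
      ih (fun p hp => h0 p (by simp [hp])) (fun p hp => hl p (by simp [hp]))
    obtain ⟨s', t', hs', ht', e1', e2'⟩ := hl g (by simp)
    have hA : 0 ≤ slp l := slp_nonneg (fun p hp => h0 p (by simp [hp]))
    obtain ⟨k1, k2⟩ := comp_cons g l
    refine ⟨slp l * s' + s, slp l * t' + t, by positivity, by positivity, ?_, ?_⟩
    · rw [k1, e1, e1']
      ring
    · rw [k2, e2, e2']
      ring

/-! ### The exchange argument -/

/-- With `G₁ = h :: t`, the order `f G₁ G₂` is no better than `G₁ f G₂` or `f G₂ G₁`, or is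
strictly worse than `f t G₂ h`, provided either `G₁` lies in the half-plane clockwise from `f`,
or `G₂` lies in the convex cone from `f` counterclockwise to `h`. -/
lemma exchange (f h : ℝ × ℝ) (t G : List (ℝ × ℝ)) (c : ℝ)
    (h1 : ∀ p ∈ h :: t, 0 ≤ p.1) (h2 : ∀ p ∈ G, 0 ≤ p.1)
    (H : (∀ g ∈ h :: t, 0 ≤ cr g f) ∨ (0 ≤ cr f h ∧ ∀ g ∈ G, InCone f h g)) :
    val (f :: (h :: t ++ G)) c ≤ val (h :: t ++ f :: G) c ∨
    val (f :: (h :: t ++ G)) c ≤ val (f :: (G ++ h :: t)) c ∨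
    val (f :: (h :: t ++ G)) c < val (f :: (t ++ G ++ [h])) c := by
  by_contra! hcon
  obtain ⟨n1, n2, n3⟩ := hcon
  have hA : 0 ≤ slp G := slp_nonneg h2
  have hcf : comp [f] = f := by ext <;> simp [comp, slp, val]
  have hch : comp [h] = h := by ext <;> simp [comp, slp, val]
  have s1 : val (f :: (h :: t ++ G)) c =
      val (h :: t ++ f :: G) c + slp G * cr f (comp (h :: t)) := by
    have e1 : f :: (h :: t ++ G) = ([f] ++ h :: t) ++ G := by simp
    have e2 : h :: t ++ f :: G = (h :: t ++ [f]) ++ G := by simp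
    rw [e1, e2, val_append, val_append _ G, val_eq G, val_eq G (val (h :: t ++ [f]) c),
      val_swap (h :: t) [f], hcf]
    ring
  have s2 : val (f :: (h :: t ++ G)) c =
      val (f :: (G ++ h :: t)) c + cr (comp (h :: t)) (comp G) := by
    rw [val_cons, val_cons, val_swap G (h :: t)]
  have s3 : val (f :: (h :: t ++ G)) c =
      val (f :: (t ++ G ++ [h])) c + cr h (comp (t ++ G)) := by
    have e1 : h :: t ++ G = [h] ++ (t ++ G) := by simp
    rw [val_cons, val_cons, e1, val_swap (t ++ G) [h], hch]
  have p1 : 0 < slp G * cr f (comp (h :: t)) := by linarith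
  have p2 : 0 < cr (comp (h :: t)) (comp G) := by linarith
  have p3 : 0 ≤ cr h (comp (t ++ G)) := by linarith
  have pc : 0 < cr f (comp (h :: t)) := pos_of_mul_pos_right p1 hA
  have pA : 0 < slp G := pos_of_mul_pos_left p1 pc.le
  rcases H with H | ⟨hfh, H⟩
  · have := halfplane_comp f _ h1 H
    simp only [cr] at this pc
    linarith
  · obtain ⟨s, r, hs, hr, e1, e2⟩ := cone_comp f h G h2 H
    have q1 : cr (comp (h :: t)) (comp G) =
        r * cr (comp (h :: t)) h - s * cr f (comp (h :: t)) := by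
      simp only [cr]
      rw [e1, e2]
      ring
    have q2 : 0 < cr (comp (h :: t)) h := by
      have : 0 ≤ s * cr f (comp (h :: t)) := by positivity
      exact pos_of_mul_pos_right (by linarith : 0 < r * cr (comp (h :: t)) h) hr
    have q3 : cr h (comp (t ++ G)) =
        - (slp G * cr (comp (h :: t)) h) - s * cr f h := by
      -- the vector of `h` itself contributes nothing to its own cross product
      have k : cr h (comp (t ++ G)) = slp G * cr h (comp (h :: t)) + cr h (comp G) := by
        have v0 : val (t ++ G) 0 = slp G * val t 0 + val G 0 := by
          rw [val_append, val_eq]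
        have v1 : val (h :: t) 0 = slp t * h.2 + val t 0 := by
          rw [val_cons, val_eq]; ring
        simp only [cr, comp]
        rw [v0, v1, slp_append, slp_cons]
        ring
      have k2 : cr h (comp G) = - (s * cr f h) := by
        simp only [cr]
        rw [e1, e2]
        ring
      rw [k, k2]
      simp only [cr]
      ring
    have : 0 < slp G * cr (comp (h :: t)) h := by positivity
    have : 0 ≤ s * cr f h := by positivity
    linarith

/-! ### Directions -/

/-- `x` is an angle (determined modulo `2π`) of the vector `(b, a - 1)` of the pair `u = (a, b)`,
which is then nonzero. -/
def HasAng (u : ℝ × ℝ) (x : ℝ) : Prop :=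
  ∃ r : ℝ, 0 < r ∧ u.2 = r * Real.cos x ∧ u.1 - 1 = r * Real.sin x

/-- The angle of the vector `(b, a - 1)` in `(-π, π]`. -/
noncomputable def th (u : ℝ × ℝ) : ℝ := Complex.arg ⟨u.2, u.1 - 1⟩

lemma hasAng_th {u : ℝ × ℝ} (hu : u ≠ (1, 0)) : HasAng u (th u) := by
  refine ⟨‖(⟨u.2, u.1 - 1⟩ : ℂ)‖, ?_, ?_, ?_⟩
  · rw [norm_pos_iff]
    intro h
    apply hu
    have h1 := congrArg Complex.re h
    have h2 := congrArg Complex.im h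
    simp at h1 h2
    ext
    · simp; linarith
    · simpa using h1
  · exact (Complex.norm_mul_cos_arg ⟨u.2, u.1 - 1⟩).symm
  · exact (Complex.norm_mul_sin_arg ⟨u.2, u.1 - 1⟩).symm

lemma HasAng.add {u : ℝ × ℝ} {x : ℝ} (h : HasAng u x) : HasAng u (x + 2 * Real.pi) := by
  simpa [HasAng] using h

lemma HasAng.sub {u : ℝ × ℝ} {x : ℝ} (h : HasAng u x) : HasAng u (x - 2 * Real.pi) := by
  simpa [HasAng] using h

lemma HasAng.cr {u v : ℝ × ℝ} {x y : ℝ} (hu : HasAng u x) (hv : HasAng v y) :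
    ∃ k : ℝ, 0 < k ∧ cr u v = k * Real.sin (y - x) := by
  obtain ⟨r, hr, e1, e2⟩ := hu
  obtain ⟨s, hs, e3, e4⟩ := hv
  refine ⟨r * s, by positivity, ?_⟩
  rw [_root_.cr, e1, e2, e3, e4, Real.sin_sub]
  ring

lemma HasAng.cr_nonneg {u v : ℝ × ℝ} {x y : ℝ} (hu : HasAng u x) (hv : HasAng v y)
    (h0 : x ≤ y) (h1 : y ≤ x + Real.pi) : 0 ≤ _root_.cr u v := by
  obtain ⟨k, hk, e⟩ := hu.cr hv
  rw [e]
  exact mul_nonneg hk.le (Real.sin_nonneg_of_nonneg_of_le_pi (by linarith) (by linarith))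

lemma HasAng.cr_pos {u v : ℝ × ℝ} {x y : ℝ} (hu : HasAng u x) (hv : HasAng v y)
    (h0 : x < y) (h1 : y < x + Real.pi) : 0 < _root_.cr u v := by
  obtain ⟨k, hk, e⟩ := hu.cr hv
  rw [e]
  exact mul_pos hk (Real.sin_pos_of_pos_of_lt_pi (by linarith) (by linarith))

lemma inCone_of_ang {f h g : ℝ × ℝ} {x y z : ℝ} (hf : HasAng f x) (hh : HasAng h y)
    (hg : HasAng g z) (h1 : x ≤ z) (h2 : z ≤ y) (h3 : y < x + Real.pi) : InCone f h g := by
  rcases eq_or_lt_of_le (h1.trans h2) with hxy | hxy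
  · -- all three directions coincide
    have hz : z = x := by linarith
    subst hz
    obtain ⟨r, hr, e1, e2⟩ := hf
    obtain ⟨s, hs, e3, e4⟩ := hg
    refine ⟨s / r, 0, by positivity, le_rfl, ?_, ?_⟩
    · rw [e1, e3]; field_simp; ring
    · rw [e2, e4]; field_simp; ring
  · have hD := hf.cr_pos hh hxy h3
    have c1 := hf.cr_nonneg hg h1 (by linarith)
    have c2 := hg.cr_nonneg hh h2 (by linarith)
    -- Cramer's rule
    refine ⟨cr g h / cr f h, cr f g / cr f h, by positivity, by positivity, ?_, ?_⟩
    · field_simp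
      simp only [cr]
      ring
    · field_simp
      simp only [cr]
      ring

/-- `exchange`, with its hypothesis read off from angles: going counterclockwise once around,
starting at the angle `α` of `h`, one meets `G₁ = h :: t`, then `f`, then `G₂`. -/
lemma exchange_ang (f h : ℝ × ℝ) (t G : List (ℝ × ℝ)) (c : ℝ)
    (h1 : ∀ p ∈ h :: t, 0 ≤ p.1) (h2 : ∀ p ∈ G, 0 ≤ p.1) (α φ : ℝ)
    (hh : HasAng h α) (hf : HasAng f φ) (hφ : φ ≤ α + 2 * Real.pi)
    (a1 : ∀ g ∈ h :: t, ∃ x, HasAng g x ∧ α ≤ x ∧ x ≤ φ)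
    (a2 : ∀ g ∈ G, ∃ x, HasAng g x ∧ φ ≤ x ∧ x ≤ α + 2 * Real.pi) :
    val (f :: (h :: t ++ G)) c ≤ val (h :: t ++ f :: G) c ∨
    val (f :: (h :: t ++ G)) c ≤ val (f :: (G ++ h :: t)) c ∨
    val (f :: (h :: t ++ G)) c < val (f :: (t ++ G ++ [h])) c := by
  apply exchange f h t G c h1 h2
  rcases le_or_gt φ (α + Real.pi) with hle | hgt
  · left
    intro g hg
    obtain ⟨x, hx, x1, x2⟩ := a1 g hg
    exact hx.cr_nonneg hf x2 (by linarith)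
  · right
    refine ⟨hf.cr_nonneg hh.add hφ (by linarith), ?_⟩
    intro g hg
    obtain ⟨x, hx, x1, x2⟩ := a2 g hg
    exact inCone_of_ang hf hh.add hx x1 x2 (by linarith)

/-! ### Optimality of a rotation of a sorted list -/

/-- If `f G₁ G₂` is optimal and `f` fits cyclically between `G₁` and `G₂`, then some rotation of
`G₁ f G₂` is optimal too. -/
lemma rotation_of_optimal (f : ℝ × ℝ) (G₁ G₂ l : List (ℝ × ℝ)) (c : ℝ)
    (h0 : ∀ p ∈ l, 0 ≤ p.1) (hl : l ~r G₁ ++ f :: G₂)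
    (hopt : ∀ ρ : List (ℝ × ℝ), ρ.Perm l → val ρ c ≤ val (f :: (G₁ ++ G₂)) c)
    (H : ∀ h t, G₁ = h :: t → ∃ α φ : ℝ, HasAng h α ∧ HasAng f φ ∧ φ ≤ α + 2 * Real.pi ∧
      (∀ g ∈ G₁, ∃ x, HasAng g x ∧ α ≤ x ∧ x ≤ φ) ∧
      (∀ g ∈ G₂, ∃ x, HasAng g x ∧ φ ≤ x ∧ x ≤ α + 2 * Real.pi)) :
    ∃ r : List (ℝ × ℝ), r ~r l ∧ ∀ ρ : List (ℝ × ℝ), ρ.Perm l → val ρ c ≤ val r c := by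
  have hp : l.Perm (G₁ ++ f :: G₂) := hl.perm
  cases G₁ with
  | nil => exact ⟨f :: G₂, by simpa using hl.symm, by simpa using hopt⟩
  | cons h t =>
    obtain ⟨α, φ, hh, hf, hφ, a1, a2⟩ := H h t rfl
    have h1 : ∀ p ∈ h :: t, 0 ≤ p.1 := fun p hm =>
      h0 p (hp.mem_iff.2 (List.mem_append_left _ hm))
    have h2 : ∀ p ∈ G₂, 0 ≤ p.1 := fun p hm =>
      h0 p (hp.mem_iff.2 (List.mem_append_right _ (List.mem_cons_of_mem _ hm)))
    rcases exchange_ang f h t G₂ c h1 h2 α φ hh hf hφ a1 a2 with k | k | k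
    · exact ⟨_, hl.symm, fun ρ hρ => (hopt ρ hρ).trans k⟩
    · refine ⟨f :: (G₂ ++ h :: t), ?_, fun ρ hρ => (hopt ρ hρ).trans k⟩
      refine List.IsRotated.trans ?_ hl.symm
      have := List.isRotated_append (l := f :: G₂) (l' := h :: t)
      simpa using this
    · exfalso
      refine absurd (hopt (f :: (t ++ G₂ ++ [h])) ?_) (not_le.2 k)
      refine List.Perm.trans ?_ hp.symm
      rw [← Multiset.coe_eq_coe]
      simp only [← Multiset.cons_coe, ← Multiset.coe_add, List.cons_append,
        ← Multiset.singleton_add]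
      abel

lemma exists_rotation (N : ℕ) (l : List (ℝ × ℝ)) (hN : l.length = N)
    (h0 : ∀ p ∈ l, 0 ≤ p.1) (hid : ∀ p ∈ l, p ≠ (1, 0))
    (hs : l.Pairwise (fun u v => th u ≤ th v)) (c : ℝ) :
    ∃ r : List (ℝ × ℝ), r ~r l ∧ ∀ ρ : List (ℝ × ℝ), ρ.Perm l → val ρ c ≤ val r c := by
  classical
  induction N generalizing l c with
  | zero =>
    obtain rfl := List.length_eq_zero_iff.1 hN
    refine ⟨[], List.IsRotated.refl _, fun ρ hρ => ?_⟩
    rw [List.perm_nil.1 hρ]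
  | succ N ih =>
    obtain ⟨ρ, hρ, hmax⟩ := l.permutations.toFinset.exists_max_image (fun m => val m c)
      ⟨l, by simp⟩
    simp only [List.mem_toFinset, List.mem_permutations] at hρ hmax
    cases ρ with
    | nil =>
      have := hρ.length_eq
      simp [hN] at this
    | cons f ρ =>
      obtain ⟨m1, m2, rfl⟩ := List.append_of_mem (hρ.mem_iff.1 List.mem_cons_self)
      have hsub : (m1 ++ m2).Sublist (m1 ++ f :: m2) :=
        (List.Sublist.refl m1).append (List.sublist_cons_self f m2)
      have hρ' : ρ.Perm (m1 ++ m2) :=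
        (List.perm_cons f).1 (hρ.trans List.perm_middle)
      obtain ⟨g, hg, hgmax⟩ := ih (m1 ++ m2) (by simp at hN ⊢; omega)
        (fun p hp => h0 p (hsub.subset hp)) (fun p hp => hid p (hsub.subset hp))
        (hs.sublist hsub) (f.1 * c + f.2)
      have hopt : ∀ ρ : List (ℝ × ℝ), ρ.Perm (m1 ++ f :: m2) → val ρ c ≤ val (f :: g) c :=
        fun ρ' h' => (hmax ρ' h').trans (hgmax ρ hρ')
      have hA : ∀ p ∈ m1 ++ f :: m2, HasAng p (th p) := fun p hp => hasAng_th (hid p hp)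
      have hlo : ∀ p, -Real.pi < th p := fun p => Complex.neg_pi_lt_arg _
      have hhi : ∀ p, th p ≤ Real.pi := fun p => Complex.arg_le_pi _
      -- the case in which the cut point of the rotation `g` lies to the left of `f`
      have caseB : ∀ l1 e : List (ℝ × ℝ), m1 = l1 ++ e → g = e ++ m2 ++ l1 →
          ∃ r : List (ℝ × ℝ), r ~r m1 ++ f :: m2 ∧
            ∀ ρ : List (ℝ × ℝ), ρ.Perm (m1 ++ f :: m2) → val ρ c ≤ val r c := by
        rintro l1 e rfl rfl
        refine rotation_of_optimal f e (m2 ++ l1) _ c h0 ?_ (by simpa using hopt) ?_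
        · have := List.isRotated_append (l := l1) (l' := e ++ f :: m2)
          simpa using this
        · rintro h t rfl
          simp only [List.pairwise_append, List.pairwise_cons, List.mem_append,
            List.mem_cons] at hs
          refine ⟨th h, th f, hA h (by simp), hA f (by simp),
            by linarith [hlo h, hhi f], ?_, ?_⟩
          · intro p hp
            refine ⟨th p, hA p (by simp at hp ⊢; tauto), ?_, ?_⟩
            · rcases List.mem_cons.1 hp with rfl | hp
              · exact le_rfl
              · exact hs.1.2.1.1 p hp
            · exact hs.2.2 p (Or.inr (List.mem_cons.1 hp)) f (Or.inl rfl)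
          · intro p hp
            rcases List.mem_append.1 hp with hp | hp
            · exact ⟨th p, hA p (by simp [hp]), hs.2.1.1 p hp, by linarith [hlo h, hhi p]⟩
            · refine ⟨th p + 2 * Real.pi, (hA p (by simp [hp])).add,
                by linarith [hlo p, hhi f], ?_⟩
              linarith [hs.1.2.2 p hp h (Or.inl rfl)]
      -- the case in which the cut point of the rotation `g` lies to the right of `f`
      have caseA : ∀ e l2 : List (ℝ × ℝ), m2 = e ++ l2 → g = l2 ++ m1 ++ e →
          ∃ r : List (ℝ × ℝ), r ~r m1 ++ f :: m2 ∧
            ∀ ρ : List (ℝ × ℝ), ρ.Perm (m1 ++ f :: m2) → val ρ c ≤ val r c := by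
        intro e l2 he hg'
        cases l2 with
        | nil => exact caseB [] m1 (by simp) (by simp [hg', he])
        | cons h t =>
          subst he hg'
          refine rotation_of_optimal f (h :: t ++ m1) e _ c h0 ?_ (by simpa using hopt) ?_
          · have := List.isRotated_append (l := m1 ++ f :: e) (l' := h :: t)
            simpa using this
          · intro h' t' ht'
            obtain ⟨rfl, rfl⟩ : h = h' ∧ t ++ m1 = t' := by simpa using ht'
            simp only [List.pairwise_append, List.pairwise_cons, List.mem_append,
              List.mem_cons] at hs
            have hfh : th f ≤ th h := hs.2.1.1 h (by simp)
            refine ⟨th h - 2 * Real.pi, th f, (hA h (by simp)).sub, hA f (by simp),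
              by linarith, ?_, ?_⟩
            · intro p hp
              rcases List.mem_append.1 hp with hp | hp
              · refine ⟨th p - 2 * Real.pi, (hA p (by simp at hp ⊢; tauto)).sub, ?_,
                  by linarith [hlo f, hhi p]⟩
                rcases List.mem_cons.1 hp with rfl | hp
                · exact le_rfl
                · linarith [hs.2.1.2.2.1.1 p hp]
              · exact ⟨th p, hA p (by simp [hp]), by linarith [hlo p, hhi h],
                  hs.2.2 p hp f (Or.inl rfl)⟩
            · intro p hp
              refine ⟨th p, hA p (by simp [hp]), hs.2.1.1 p (by simp [hp]), ?_⟩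
              linarith [hs.2.1.2.2.2 p hp h (Or.inl rfl)]
      obtain ⟨k, hk, hgk⟩ := List.isRotated_iff_mod.1 hg.symm
      rw [List.rotate_eq_drop_append_take hk] at hgk
      obtain ⟨l1, l2, e12, rfl⟩ : ∃ l1 l2, m1 ++ m2 = l1 ++ l2 ∧ g = l2 ++ l1 :=
        ⟨_, _, (List.take_append_drop k _).symm, hgk.symm⟩
      rcases List.append_eq_append_iff.1 e12 with ⟨e, e1, e2⟩ | ⟨e, e1, e2⟩
      · exact caseA e l2 e2 (by simp [e1])
      · exact caseB l1 e e1 (by simp [e2])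

/-! ### The lexicographic order is the order of angles -/

lemma th_le_of_lex {u v : ℝ × ℝ} (hu : u ≠ (1, 0)) (hv : v ≠ (1, 0))
    (h : del u.1 < del v.1 ∨ (del u.1 = del v.1 ∧ gam u.1 u.2 ≤ gam v.1 v.2)) :
    th u ≤ th v := by
  have neg : ∀ {w : ℝ × ℝ}, w.1 < 1 → th w < 0 := fun hw =>
    Complex.arg_neg_iff.2 (by simpa using hw)
  have nonneg : ∀ {w : ℝ × ℝ}, 1 ≤ w.1 → 0 ≤ th w := fun hw =>
    Complex.arg_nonneg_iff.2 (by simpa using hw)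
  have hlo : ∀ p, -Real.pi < th p := fun p => Complex.neg_pi_lt_arg _
  have hhi : ∀ p, th p ≤ Real.pi := fun p => Complex.arg_le_pi _
  -- two vectors in the same open half-plane are compared by their cross product
  have key : th u < th v + Real.pi → 0 ≤ cr u v → th u ≤ th v := by
    intro h1 h2
    by_contra! hlt
    have := (hasAng_th hv).cr_pos (hasAng_th hu) hlt h1
    simp only [cr] at this h2
    linarith
  rcases lt_or_ge u.1 1 with hu1 | hu1 <;> rcases lt_or_ge v.1 1 with hv1 | hv1
  · simp only [del, not_le.2 hu1, not_le.2 hv1, gam, hu1.ne, hv1.ne, if_false,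
      EReal.coe_le_coe_iff, lt_irrefl, false_or, true_and] at h
    rw [div_le_div_iff₀ (by linarith) (by linarith)] at h
    apply key
    · linarith [neg hu1, hlo v]
    · simp only [cr]; linarith
  · exact (neg hu1).le.trans (nonneg hv1)
  · simp [del, hu1, not_le.2 hv1] at h
  · simp only [del, hu1, hv1, if_true, lt_irrefl, false_or, true_and] at h
    have two : ∀ {w : ℝ × ℝ}, w ≠ (1, 0) → w.1 = 1 → w.2 < 0 ∨ 0 < w.2 := by
      intro w hw h1
      apply lt_or_gt_of_ne
      intro h2
      exact hw (Prod.ext h1 h2)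
    have argpi : ∀ {w : ℝ × ℝ}, w.1 = 1 → w.2 < 0 → th w = Real.pi := fun h1 h2 =>
      Complex.arg_eq_pi_iff.2 ⟨h2, by simp [h1]⟩
    have argzero : ∀ {w : ℝ × ℝ}, w.1 = 1 → 0 < w.2 → th w = 0 := fun h1 h2 =>
      Complex.arg_eq_zero_iff.2 ⟨h2.le, by simp [h1]⟩
    rcases eq_or_lt_of_le hv1 with hv2 | hv2
    · rcases two hv hv2.symm with hb | hb
      · rw [argpi hv2.symm hb]; exact hhi u
      · rcases eq_or_lt_of_le hu1 with hu2 | hu2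
        · rcases two hu hu2.symm with hb' | hb'
          · simp [gam, ← hu2, ← hv2, hb', not_lt.2 hb.le] at h
          · rw [argzero hu2.symm hb']; exact nonneg hv1
        · simp [gam, ← hv2, hu2.ne', not_lt.2 hb.le] at h
    · rcases eq_or_lt_of_le hu1 with hu2 | hu2
      · rcases two hu hu2.symm with hb' | hb'
        · simp [gam, ← hu2, hv2.ne', hb'] at h
        · rw [argzero hu2.symm hb']; exact nonneg hv1
      · simp only [gam, hu2.ne', hv2.ne', if_false, EReal.coe_le_coe_iff] at h
        rw [← neg_div_neg_eq u.2, ← neg_div_neg_eq v.2,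
          div_le_div_iff₀ (by linarith) (by linarith)] at h
        apply key
        · have : th v ≠ 0 := fun h0 => by
            have := (Complex.arg_eq_zero_iff.1 h0).2
            simp at this
            linarith
          have := lt_of_le_of_ne (nonneg hv1) this.symm
          linarith [hhi u]
        · simp only [cr]; linarith

lemma compSeq_eq_val {n : ℕ} (a b : Fin n → ℝ) (ρ : Fin n → Fin n) (c : ℝ) :
    compSeq (fun i x => a i * x + b i) ρ n c =
      val ((List.finRange n).map (fun i => (a (ρ i), b (ρ i)))) c := by
  simp [compSeq, val, List.foldl_map, List.take_of_length_le]

/-- If `σ` is compatible with the lexicographic order on `(δ(fᵢ), γ(fᵢ))`, some cyclic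
rotation `(σ(t), …, σ(n), σ(1), …, σ(t-1))` (1-indexed `t`) of `σ` is optimal for the
maximum total composition ordering problem. -/
theorem stmt18 (n : ℕ) (hn : 0 < n) (c : ℝ) (a b : Fin n → ℝ) (ha : ∀ i, 0 ≤ a i)
    (hnid : ∀ i, (a i, b i) ≠ (1, 0)) (σ : Equiv.Perm (Fin n))
    (hcompat : ∀ i j : Fin n, i < j →
      del (a (σ i)) < del (a (σ j)) ∨
        (del (a (σ i)) = del (a (σ j)) ∧
          gam (a (σ i)) (b (σ i)) ≤ gam (a (σ j)) (b (σ j)))) :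
    ∃ t : ℕ, 1 ≤ t ∧ t ≤ n ∧ ∃ τ : Equiv.Perm (Fin n),
      (∀ i : Fin n, τ i = σ ⟨(t - 1 + i.val) % n, Nat.mod_lt _ hn⟩) ∧
      ∀ ρ : Equiv.Perm (Fin n),
        compSeq (fun i x => a i * x + b i) ρ n c ≤
          compSeq (fun i x => a i * x + b i) τ n c := by
  set p : Fin n → ℝ × ℝ := fun i => (a i, b i) with hp
  set L : List (ℝ × ℝ) := (List.finRange n).map (fun i => p (σ i)) with hL
  have hlen : L.length = n := by simp [hL]
  have hsorted : L.Pairwise (fun u v => th u ≤ th v) := by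
    rw [hL, List.pairwise_map]
    refine (List.pairwise_lt_finRange n).imp ?_
    intro i j hij
    exact th_le_of_lex (hnid _) (hnid _) (hcompat i j hij)
  obtain ⟨r, hr, hmax⟩ := exists_rotation n L hlen
    (by
      intro q hq
      obtain ⟨i, -, rfl⟩ := List.mem_map.1 hq
      exact ha _)
    (by
      intro q hq
      obtain ⟨i, -, rfl⟩ := List.mem_map.1 hq
      exact hnid _) hsorted c
  obtain ⟨m, hm⟩ := hr.symm
  have : NeZero n := ⟨hn.ne'⟩
  have hmn : m % n < n := Nat.mod_lt _ hn
  refine ⟨m % n + 1, by omega, hmn, (Equiv.addLeft (⟨m % n, hmn⟩ : Fin n)).trans σ, ?_, ?_⟩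
  · intro i
    simp [Fin.add_def]
  · intro ρ
    rw [compSeq_eq_val, compSeq_eq_val]
    have hrot : (List.finRange n).map (fun i =>
        p (((Equiv.addLeft (⟨m % n, hmn⟩ : Fin n)).trans σ) i)) = r := by
      rw [← hm]
      apply List.ext_getElem
      · simp [hL]
      · intro k h1 h2
        rw [List.getElem_rotate]
        simp [hL, Fin.add_def, Nat.add_comm]
    have hperm : ((List.finRange n).map (fun i => p (ρ i))).Perm L := by
      have e : ∀ π : Equiv.Perm (Fin n), ((List.finRange n).map (fun i => p (π i))).Perm
          ((List.finRange n).map p) := by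
        intro π
        have := (Equiv.Perm.map_finRange_perm π).map p
        simpa [List.map_map, Function.comp_def] using this
      exact (e ρ).trans (e σ).symm
    have := hmax _ hperm
    rw [← hrot] at this
    exact this
end

section
/- Let a_1,…,a_n be positive integers and let T be a positive integer with ∑_{i=1}^n a_i = 2T. Define f_i : ℝ → ℝ by f_i(x) = x + a_i for i ∈ [n] and f_{n+1}(x) = min{2x, x/2 + 3T/2}. Then for every permutation σ of [n+1], letting l be the index with σ(l) = n+1 and q = ∑_{i=1}^{l−1} a_{σ(i)}, one has f_{σ(n+1)}∘⋯∘f_{σ(1)}(0) = min{q, 3T/2 − q/2} + 2T; in particular this value equals 3T if q = T and is at most 3T − 1/2 if q ≠ T. Consequently, the maximum over all permutations σ of [n+1] of f_{σ(n+1)}∘⋯∘f_{σ(1)}(0) equals 3T if there exists a subset I ⊆ [n] with ∑_{i∈I} a_i = T, and is at most 3T − 1/2 otherwise. -/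
/-- The functions of the Partition reduction: `f i x = x + a i` for `i ∈ [n]` and
`f (n+1) x = min (2x) (x/2 + 3T/2)`. -/
noncomputable def f19 (n : ℕ) (a : Fin n → ℕ) (T : ℕ) (i : Fin (n + 1)) (x : ℝ) : ℝ :=
  if h : i.val < n then x + a ⟨i.val, h⟩ else min (2 * x) (x / 2 + 3 * T / 2)

/-- The increment contributed by index `j`: `a j` for `j ∈ [n]`, and `0` for the index `n+1`. -/
def weight {n : ℕ} (a : Fin n → ℕ) (j : Fin (n + 1)) : ℝ :=
  if h : j.val < n then ((a ⟨j.val, h⟩ : ℕ) : ℝ) else 0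

/-- The indices in `[n]` that `σ` places before `n+1`. -/
def before {n : ℕ} (σ : Equiv.Perm (Fin (n + 1))) : Finset (Fin n) :=
  Finset.univ.filter (fun j => σ.symm j.castSucc < σ.symm (Fin.last n))

lemma weight_castSucc {n : ℕ} (a : Fin n → ℕ) (j : Fin n) : weight a j.castSucc = a j := by
  simp [weight]

lemma weight_last {n : ℕ} (a : Fin n → ℕ) : weight a (Fin.last n) = 0 := by
  simp [weight]

lemma f19_castSucc (n : ℕ) (a : Fin n → ℕ) (T : ℕ) (j : Fin n) (x : ℝ) :
    f19 n a T j.castSucc x = x + a j := by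
  simp [f19]

lemma f19_last (n : ℕ) (a : Fin n → ℕ) (T : ℕ) (x : ℝ) :
    f19 n a T (Fin.last n) x = min (2 * x) (x / 2 + 3 * T / 2) := by
  simp [f19]

lemma compSeq_succ {n : ℕ} (f : Fin n → ℝ → ℝ) (σ : Fin n → Fin n) (k : ℕ) (hk : k < n) (c : ℝ) :
    compSeq f σ (k + 1) c = f (σ ⟨k, hk⟩) (compSeq f σ k c) := by
  simp [compSeq, List.take_add_one, hk]

lemma sum_filter_lt_succ {n : ℕ} (w : Fin n → ℝ) (k : ℕ) (hk : k < n) :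
    ∑ i ∈ Finset.univ.filter (fun i : Fin n => i.val < k + 1), w i =
      ∑ i ∈ Finset.univ.filter (fun i : Fin n => i.val < k), w i + w ⟨k, hk⟩ := by
  have h : Finset.univ.filter (fun i : Fin n => i.val < k + 1) =
      insert ⟨k, hk⟩ (Finset.univ.filter (fun i : Fin n => i.val < k)) := by
    ext i
    simp [Fin.ext_iff]
    omega
  rw [h, Finset.sum_insert (by simp), add_comm]

/-- The running value after `k` steps in terms of partial sums `S` of the weights: it is `S k` until
the index `n+1` has been processed, and afterwards the image of `S l` under `f_{n+1}` increased by
the weights that follow position `l`. -/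
lemma compSeq_eq_of_sums (n : ℕ) (a : Fin n → ℕ) (T : ℕ) (σ : Equiv.Perm (Fin (n + 1)))
    (S : ℕ → ℝ) (h0 : S 0 = 0)
    (hS : ∀ k (hk : k < n + 1), S (k + 1) = S k + weight a (σ ⟨k, hk⟩))
    (k : ℕ) (hk : k ≤ n + 1) :
    compSeq (f19 n a T) σ k 0 =
      if k ≤ (σ.symm (Fin.last n)).val then S k
      else min (2 * S (σ.symm (Fin.last n)).val) (S (σ.symm (Fin.last n)).val / 2 + 3 * T / 2)
        + (S k - S (σ.symm (Fin.last n)).val) := by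
  induction k with
  | zero => simp [compSeq, h0]
  | succ k ih =>
    rw [compSeq_succ _ _ k hk, ih (by omega), hS k hk]
    by_cases hl : σ ⟨k, hk⟩ = Fin.last n
    · have hkl : (σ.symm (Fin.last n)).val = k := by rw [← hl]; simp
      rw [hl, f19_last, weight_last, hkl]
      simp
    · obtain ⟨j, hj⟩ := Fin.exists_castSucc_eq.2 hl
      have hkl : (σ.symm (Fin.last n)).val ≠ k := by
        intro h
        apply hl
        rw [← Equiv.eq_symm_apply]
        exact Fin.ext h.symm
      rw [← hj, f19_castSucc, weight_castSucc]
      split_ifs <;> first | omega | ring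

lemma sum_weight {n : ℕ} (a : Fin n → ℕ) : ∑ j, weight a j = ((∑ j, a j : ℕ) : ℝ) := by
  simp [Fin.sum_univ_castSucc, weight_castSucc, weight_last]

lemma prefix_sum_eq {n : ℕ} (a : Fin n → ℕ) (σ : Equiv.Perm (Fin (n + 1))) :
    ∑ i ∈ Finset.univ.filter (fun i => i < σ.symm (Fin.last n)), weight a (σ i) =
      ((∑ j ∈ before σ, a j : ℕ) : ℝ) := by
  have h := Equiv.sum_comp σ
    (fun j => if σ.symm j < σ.symm (Fin.last n) then weight a j else 0)
  simp only [Equiv.symm_apply_apply] at h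
  rw [Finset.sum_filter, h, Fin.sum_univ_castSucc]
  simp [weight_castSucc, before, Finset.sum_filter]

lemma compSeq_f19 (n : ℕ) (a : Fin n → ℕ) (T : ℕ) (hsum : ∑ i, a i = 2 * T)
    (σ : Equiv.Perm (Fin (n + 1))) (q : ℝ) (hq : q = ((∑ j ∈ before σ, a j : ℕ) : ℝ)) :
    compSeq (f19 n a T) σ (n + 1) 0 = min q (3 * T / 2 - q / 2) + 2 * T := by
  have h := compSeq_eq_of_sums n a T σ
    (fun k => ∑ i ∈ Finset.univ.filter (fun i : Fin (n + 1) => i.val < k), weight a (σ i))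
    (by simp) (fun k hk => sum_filter_lt_succ (fun i => weight a (σ i)) k hk) (n + 1) le_rfl
  have htot : ∑ i ∈ Finset.univ.filter (fun i : Fin (n + 1) => i.val < n + 1), weight a (σ i)
      = 2 * T := by
    rw [Finset.filter_true_of_mem (fun i _ => i.isLt), Equiv.sum_comp σ (weight a), sum_weight,
      hsum]
    push_cast
    ring
  have hpre : ∑ i ∈ Finset.univ.filter (fun i : Fin (n + 1) =>
      i.val < (σ.symm (Fin.last n)).val), weight a (σ i) = q := by
    rw [hq, ← prefix_sum_eq]
    rfl
  rw [if_neg (by have := (σ.symm (Fin.last n)).isLt; omega)] at h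
  simp only [htot, hpre] at h
  rw [h, show min (2 * q) (q / 2 + 3 * T / 2) = min q (3 * T / 2 - q / 2) + q by
    rw [min_add]; congr 1 <;> ring]
  ring

/-- Stable sorting by the key `0` on `I`, `1` at `n+1`, `2` elsewhere puts exactly `I` before
`n+1`. -/
lemma exists_perm_prefix {n : ℕ} (I : Finset (Fin n)) :
    ∃ σ : Equiv.Perm (Fin (n + 1)), before σ = I := by
  let key : Fin (n + 1) → ℕ := Fin.snoc (fun j => if j ∈ I then 0 else 2) 1
  have hkl : key (Fin.last n) = 1 := by simp [key]
  have hkc : ∀ j : Fin n, key j.castSucc = if j ∈ I then 0 else 2 := by simp [key]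
  refine ⟨Tuple.sort key, ?_⟩
  have hmono : ∀ x y, (Tuple.sort key).symm x ≤ (Tuple.sort key).symm y → key x ≤ key y := by
    intro x y h
    simpa using Tuple.monotone_sort key h
  ext j
  simp only [before, Finset.mem_filter, Finset.mem_univ, true_and]
  constructor
  · intro h
    have := hmono _ _ h.le
    rw [hkl, hkc] at this
    by_contra hj
    simp [hj] at this
  · intro hj
    by_contra h
    have := hmono _ _ (not_lt.1 h)
    rw [hkl, hkc] at this
    simp [hj] at this

lemma value_le {m T : ℕ} (h : m ≠ T) :
    min (m : ℝ) (3 * T / 2 - m / 2) + 2 * T ≤ 3 * T - 1 / 2 := by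
  rcases lt_or_gt_of_ne h with h | h
  · have h' : (m : ℝ) + 1 ≤ T := by exact_mod_cast h
    linarith [min_le_left (m : ℝ) (3 * T / 2 - m / 2)]
  · have h' : (T : ℝ) + 1 ≤ m := by exact_mod_cast h
    linarith [min_le_right (m : ℝ) (3 * T / 2 - m / 2)]

lemma value_at_T (T : ℕ) : min (T : ℝ) (3 * T / 2 - T / 2) + 2 * T = 3 * T := by
  rw [show (3 * T / 2 - T / 2 : ℝ) = T by ring, min_self]
  ring

theorem stmt19 (n : ℕ) (a : Fin n → ℕ) (T : ℕ) (ha : ∀ i, 0 < a i) (hT : 0 < T)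
    (hsum : ∑ i, a i = 2 * T) :
    (∀ σ : Equiv.Perm (Fin (n + 1)), ∀ q : ℝ,
      q = ∑ i ∈ Finset.univ.filter (fun i => i < σ.symm (Fin.last n)),
            (if h : (σ i).val < n then ((a ⟨(σ i).val, h⟩ : ℕ) : ℝ) else 0) →
      compSeq (f19 n a T) σ (n + 1) 0 = min q (3 * T / 2 - q / 2) + 2 * T ∧
      (q = T → compSeq (f19 n a T) σ (n + 1) 0 = 3 * T) ∧
      (q ≠ T → compSeq (f19 n a T) σ (n + 1) 0 ≤ 3 * T - 1 / 2)) ∧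
    ((∃ I : Finset (Fin n), (∑ i ∈ I, a i) = T) →
      IsGreatest {v : ℝ | ∃ σ : Equiv.Perm (Fin (n + 1)),
        v = compSeq (f19 n a T) σ (n + 1) 0} (3 * T)) ∧
    ((¬ ∃ I : Finset (Fin n), (∑ i ∈ I, a i) = T) →
      ∀ σ : Equiv.Perm (Fin (n + 1)),
        compSeq (f19 n a T) σ (n + 1) 0 ≤ 3 * T - 1 / 2) := by
  refine ⟨?_, ?_, ?_⟩
  · intro σ q hq
    have hq' : q = ((∑ j ∈ before σ, a j : ℕ) : ℝ) := hq.trans (prefix_sum_eq a σ)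
    have hv := compSeq_f19 n a T hsum σ q hq'
    refine ⟨hv, ?_, ?_⟩
    · rintro rfl
      rw [hv, value_at_T]
    · intro hne
      rw [hv, hq']
      apply value_le
      rintro h
      exact hne (by rw [hq', h])
  · rintro ⟨I, hI⟩
    constructor
    · obtain ⟨σ, hσ⟩ := exists_perm_prefix I
      refine ⟨σ, ?_⟩
      rw [compSeq_f19 n a T hsum σ T (by rw [hσ, hI]), value_at_T]
    · rintro v ⟨σ, rfl⟩
      rw [compSeq_f19 n a T hsum σ _ rfl]
      by_cases h : ∑ j ∈ before σ, a j = T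
      · rw [h, value_at_T]
      · linarith [value_le h]
  · intro hno σ
    rw [compSeq_f19 n a T hsum σ _ rfl]
    exact value_le fun h => hno ⟨_, h⟩
end
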